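/- arXiv:2604.12534 — 7 statements merged into one kernel-verified Lean document; each statement's English description precedes it below -/
import Mathlib

section
/- Let τ be a type, simP : τ → τ → ℝ with 0 ≤ simP(s,t) ≤ 1 for all s,t and simP(t,t) = 1 for every t, let λ ∈ (0,1), and let w_p : τ → ℝ be a weight function with w_p(t) > 0 for all t. Then for every literal (P, a⃗) with a⃗ a nonempty finite vector over τ, the weighted literal similarity of the literal with itself equals 1: simL^{weight,λ}((P,a⃗),(P,a⃗)) = 1, for any choice function β selecting entries attaining the maxima. -/
open Classical Finset

/-- Maximum of a real-valued function over a nonempty `Fin n`. -/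
noncomputable def fmax {n : ℕ} (hn : 0 < n) (f : Fin n → ℝ) : ℝ :=
  Finset.univ.sup' ⟨⟨0, hn⟩, Finset.mem_univ _⟩ f

/-- Ordered (positional) similarity between two vectors of symbols. -/
noncomputable def simOrd {τ : Type*} (simP : τ → τ → ℝ) {m n : ℕ}
    (a : Fin m → τ) (b : Fin n → τ) : ℝ :=
  (∑ i : Fin (min m n),
      simP (a ⟨i.1, lt_of_lt_of_le i.2 (Nat.min_le_left m n)⟩)
           (b ⟨i.1, lt_of_lt_of_le i.2 (Nat.min_le_right m n)⟩)) / ((min m n : ℕ) : ℝ)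

/-- Best-match (unordered) similarity between two nonempty vectors of symbols. -/
noncomputable def simUnord {τ : Type*} (simP : τ → τ → ℝ) {m n : ℕ}
    (hm : 0 < m) (hn : 0 < n) (a : Fin m → τ) (b : Fin n → τ) : ℝ :=
  ((∑ i : Fin m, fmax hn (fun j => simP (a i) (b j))) +
   (∑ j : Fin n, fmax hm (fun i => simP (b j) (a i)))) / ((m : ℝ) + (n : ℝ))

/-- Parameter similarity: convex combination of ordered and unordered similarity. -/
noncomputable def simPara {τ : Type*} (simP : τ → τ → ℝ) (lam : ℝ) {m n : ℕ}
    (hm : 0 < m) (hn : 0 < n) (a : Fin m → τ) (b : Fin n → τ) : ℝ :=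
  lam * simOrd simP a b + (1 - lam) * simUnord simP hm hn a b

/-- Ordered weight aggregation `w_ord`. -/
noncomputable def wOrd {τ : Type*} (wp : τ → ℝ) {m n : ℕ}
    (a : Fin m → τ) (b : Fin n → τ) : ℝ :=
  ∑ i : Fin (min m n),
      wp (a ⟨i.1, lt_of_lt_of_le i.2 (Nat.min_le_left m n)⟩) *
      wp (b ⟨i.1, lt_of_lt_of_le i.2 (Nat.min_le_right m n)⟩)

/-- Unordered weight aggregation `w_unord`, relative to a choice function `beta`
selecting for each symbol a best-matching entry of the other vector. -/
noncomputable def wUnord {τ : Type*} (wp : τ → ℝ)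
    (beta : τ → (k : ℕ) → (Fin k → τ) → τ) {m n : ℕ}
    (a : Fin m → τ) (b : Fin n → τ) : ℝ :=
  (∑ i : Fin m, wp (a i) * wp (beta (a i) n b)) +
  (∑ j : Fin n, wp (b j) * wp (beta (b j) m a))

/-- Weighted literal similarity between literals `(P, a)` and `(Q, b)`. -/
noncomputable def simLweight {τ : Type*} (simP : τ → τ → ℝ) (wp : τ → ℝ)
    (beta : τ → (k : ℕ) → (Fin k → τ) → τ) (lam : ℝ) {m n : ℕ}
    (hm : 0 < m) (hn : 0 < n) (P Q : τ) (a : Fin m → τ) (b : Fin n → τ) : ℝ :=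
  (wp P * wp Q * simP P Q +
      simPara simP lam hm hn a b *
        (lam * wOrd wp a b + (1 - lam) * wUnord wp beta a b)) /
  (wp P * wp Q + (lam * wOrd wp a b + (1 - lam) * wUnord wp beta a b))

/-- the weighted literal similarity of a literal with itself equals 1,
for any choice function `beta` selecting entries attaining the maxima. -/
theorem weighted_literal_self_similarity {τ : Type*} (simP : τ → τ → ℝ)
    (hbound : ∀ s t, 0 ≤ simP s t ∧ simP s t ≤ 1)
    (hrefl : ∀ t, simP t t = 1)
    (lam : ℝ) (hlam : 0 < lam ∧ lam < 1)
    (wp : τ → ℝ) (hwp : ∀ t, 0 < wp t)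
    (beta : τ → (k : ℕ) → (Fin k → τ) → τ)
    (hbeta : ∀ (x : τ) (k : ℕ) (hk : 0 < k) (y : Fin k → τ),
      (∃ j : Fin k, beta x k y = y j) ∧
      simP x (beta x k y) = fmax hk (fun j => simP x (y j)))
    {m : ℕ} (hm : 0 < m) (P : τ) (a : Fin m → τ) :
    simLweight simP wp beta lam hm hm P P a a = 1 := by
  have hfmax : ∀ i, fmax hm (fun j => simP (a i) (a j)) = 1 := by
    intro i
    unfold fmax
    apply le_antisymm
    · exact Finset.sup'_le _ _ (fun j _ => (hbound _ _).2)
    · have h := Finset.le_sup' (fun j => simP (a i) (a j)) (Finset.mem_univ i)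
      simpa only [hrefl] using h
  have hm' : (m : ℝ) ≠ 0 := by exact_mod_cast hm.ne'
  have hord : simOrd simP a a = 1 := by
    have h : ((min m m : ℕ) : ℝ) ≠ 0 := by rwa [min_self]
    unfold simOrd
    simp only [hrefl, Finset.sum_const, Finset.card_univ, Fintype.card_fin, nsmul_eq_mul, mul_one]
    exact div_self h
  have hun : simUnord simP hm hm a a = 1 := by
    have h : (m : ℝ) + m ≠ 0 := by positivity
    unfold simUnord
    simp only [hfmax, Finset.sum_const, Finset.card_univ, Fintype.card_fin, nsmul_eq_mul, mul_one]
    exact div_self h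
  have hpara : simPara simP lam hm hm a a = 1 := by
    unfold simPara
    rw [hord, hun]
    ring
  have h1 : 0 ≤ wOrd wp a a :=
    Finset.sum_nonneg (fun i _ => (mul_pos (hwp _) (hwp _)).le)
  have h2 : 0 ≤ wUnord wp beta a a :=
    add_nonneg (Finset.sum_nonneg (fun i _ => (mul_pos (hwp _) (hwp _)).le))
      (Finset.sum_nonneg (fun i _ => (mul_pos (hwp _) (hwp _)).le))
  have h3 : 0 < wp P * wp P := mul_pos (hwp P) (hwp P)
  have h4 := mul_nonneg hlam.1.le h1
  have h5 := mul_nonneg (sub_nonneg.2 hlam.2.le) h2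
  unfold simLweight
  rw [hpara, hrefl, mul_one, one_mul]
  exact div_self (ne_of_gt (by linarith))
end

section
/- Let L be a type and simL : L → L → ℝ with 0 ≤ simL(x,y) ≤ 1 for all x,y, simL(x,x) = 1 for all x, and such that simL(x,y) = 1 implies x = y. Let α > 0. Then for all nonempty finite sets C₁, C₂ of elements of L, the symmetric fuzzy Tversky similarity satisfies Tve^{α,α}(C₁,C₂) = 1 if and only if C₁ = C₂. -/
open Finset

/-- Fuzzy membership of `x` in a nonempty clause `C`: the maximal similarity of `x`
with an element of `C`. -/
noncomputable def memb {L : Type*} (simL : L → L → ℝ) (x : L)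
    (C : Finset L) (hC : C.Nonempty) : ℝ :=
  C.sup' hC (fun y => simL x y)

/-- Fuzzy Tversky similarity between two nonempty clauses. -/
noncomputable def Tve {L : Type*} (simL : L → L → ℝ) (a b : ℝ)
    (C₁ C₂ : Finset L) (h₁ : C₁.Nonempty) (h₂ : C₂.Nonempty) : ℝ :=
  (((∑ x ∈ C₁, memb simL x C₂ h₂) + (∑ y ∈ C₂, memb simL y C₁ h₁)) / 2) /
  ((((∑ x ∈ C₁, memb simL x C₂ h₂) + (∑ y ∈ C₂, memb simL y C₁ h₁)) / 2) +
    a * (∑ x ∈ C₁, (1 - memb simL x C₂ h₂)) +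
    b * (∑ y ∈ C₂, (1 - memb simL y C₁ h₁)))

theorem memb_le_one' {L : Type*} (simL : L → L → ℝ)
    (hbound : ∀ x y, 0 ≤ simL x y ∧ simL x y ≤ 1) (x : L)
    (C : Finset L) (hC : C.Nonempty) : memb simL x C hC ≤ 1 :=
  Finset.sup'_le hC _ (fun y _ => (hbound x y).2)

theorem memb_eq_one_iff' {L : Type*} (simL : L → L → ℝ)
    (hbound : ∀ x y, 0 ≤ simL x y ∧ simL x y ≤ 1)
    (hrefl : ∀ x, simL x x = 1)
    (hsep : ∀ x y, simL x y = 1 → x = y) (x : L)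
    (C : Finset L) (hC : C.Nonempty) : memb simL x C hC = 1 ↔ x ∈ C := by
  constructor
  · intro h
    obtain ⟨y, hy, hxy⟩ := Finset.exists_mem_eq_sup' hC (fun y => simL x y)
    have h1 : simL x y = 1 := by rw [← h]; exact hxy.symm
    rw [hsep x y h1]; exact hy
  · intro h
    apply le_antisymm (memb_le_one' simL hbound x C hC)
    rw [← hrefl x]
    exact Finset.le_sup' (fun y => simL x y) h

theorem subset_of_sum' {L : Type*} (simL : L → L → ℝ)
    (hbound : ∀ x y, 0 ≤ simL x y ∧ simL x y ≤ 1)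
    (hrefl : ∀ x, simL x x = 1)
    (hsep : ∀ x y, simL x y = 1 → x = y)
    (C D : Finset L) (hD : D.Nonempty)
    (h : ∑ x ∈ C, (1 - memb simL x D hD) = 0) : C ⊆ D := by
  intro x hx
  rw [Finset.sum_eq_zero_iff_of_nonneg
    (fun x _ => sub_nonneg.2 (memb_le_one' simL hbound x D hD))] at h
  exact (memb_eq_one_iff' simL hbound hrefl hsep x D hD).1 (by linarith [h x hx])

/-- the symmetric fuzzy Tversky similarity equals 1 iff the clauses are
equal. -/
theorem tversky_eq_one_iff {L : Type*} (simL : L → L → ℝ)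
    (hbound : ∀ x y, 0 ≤ simL x y ∧ simL x y ≤ 1)
    (hrefl : ∀ x, simL x x = 1)
    (hsep : ∀ x y, simL x y = 1 → x = y)
    (a : ℝ) (ha : 0 < a)
    (C₁ C₂ : Finset L) (h₁ : C₁.Nonempty) (h₂ : C₂.Nonempty) :
    Tve simL a a C₁ C₂ h₁ h₂ = 1 ↔ C₁ = C₂ := by
  constructor
  · intro h
    unfold Tve at h
    have hB : 0 ≤ ∑ x ∈ C₁, (1 - memb simL x C₂ h₂) := Finset.sum_nonneg
      (fun x _ => sub_nonneg.2 (memb_le_one' simL hbound x C₂ h₂))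
    have hD : 0 ≤ ∑ x ∈ C₂, (1 - memb simL x C₁ h₁) := Finset.sum_nonneg
      (fun x _ => sub_nonneg.2 (memb_le_one' simL hbound x C₁ h₁))
    have h' := eq_of_div_eq_one h
    have haB := mul_nonneg ha.le hB
    have haD := mul_nonneg ha.le hD
    have e1 : a * ∑ x ∈ C₁, (1 - memb simL x C₂ h₂) = 0 := by linarith
    have e2 : a * ∑ x ∈ C₂, (1 - memb simL x C₁ h₁) = 0 := by linarith
    exact Finset.Subset.antisymm
      (subset_of_sum' simL hbound hrefl hsep C₁ C₂ h₂
        ((mul_eq_zero.1 e1).resolve_left ha.ne'))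
      (subset_of_sum' simL hbound hrefl hsep C₂ C₁ h₁
        ((mul_eq_zero.1 e2).resolve_left ha.ne'))
  · intro h
    subst h
    have hm : ∀ x ∈ C₁, memb simL x C₁ h₁ = 1 := fun x hx =>
      (memb_eq_one_iff' simL hbound hrefl hsep x C₁ h₁).2 hx
    have s1 : ∑ x ∈ C₁, memb simL x C₁ h₁ = (C₁.card : ℝ) := by
      rw [Finset.sum_congr rfl hm]; simp
    have s2 : ∑ x ∈ C₁, (1 - memb simL x C₁ h₁) = 0 :=
      Finset.sum_eq_zero (fun x hx => by rw [hm x hx]; ring)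
    have hc : (0 : ℝ) < C₁.card := by exact_mod_cast h₁.card_pos
    unfold Tve
    rw [s1, s2, mul_zero, add_zero, add_zero]
    exact div_self (by linarith)
end

section
/- Let K be a type, simC_flat, simC : K → K → ℝ, and w_g : K × K → ℝ with w_g(C₁,C₂) > 0 for all pairs. Assume simC_flat(C₁,C₂) ≤ 1 for all C₁,C₂, that simC_flat(C₁,C₂) = 1 if and only if C₁ = C₂, and that simC(C,C) = 1 for all C. Then for every nonempty finite set Φ ⊆ K, the best-match set similarity of Φ with itself equals 1: simS^bm(Φ,Φ) = 1. -/
open Classical Finset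

/-- Best-match relation between two nonempty finite sets of clauses: pairs `(C₁, C₂)`
where `C₂` attains the maximum of the flat clause similarity `simCflat C₁ ·` over the
other set (in either direction). -/
noncomputable def bm {K : Type*} (simCflat : K → K → ℝ) (Φ Ψ : Finset K)
    (hΦ : Φ.Nonempty) (hΨ : Ψ.Nonempty) : Finset (K × K) :=
  ((Φ ×ˢ Ψ).filter
      (fun p => simCflat p.1 p.2 = Ψ.sup' hΨ (fun C => simCflat p.1 C))) ∪
  ((Ψ ×ˢ Φ).filter
      (fun p => simCflat p.1 p.2 = Φ.sup' hΦ (fun C => simCflat p.1 C)))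

/-- Weighted average best-match similarity between two nonempty finite sets of
clauses. -/
noncomputable def simSbm {K : Type*} (simCflat simC : K → K → ℝ)
    (wg : K × K → ℝ) (Φ Ψ : Finset K) (hΦ : Φ.Nonempty) (hΨ : Ψ.Nonempty) : ℝ :=
  (∑ p ∈ bm simCflat Φ Ψ hΦ hΨ, wg p * simC p.1 p.2) /
  (∑ p ∈ bm simCflat Φ Ψ hΦ hΨ, wg p)

/-- the best-match set similarity of a nonempty finite set with itself
equals 1. -/
theorem simSbm_self_eq_one {K : Type*} (simCflat simC : K → K → ℝ)
    (wg : K × K → ℝ) (hwg : ∀ p, 0 < wg p)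
    (hflat_le : ∀ C₁ C₂, simCflat C₁ C₂ ≤ 1)
    (hflat_one : ∀ C₁ C₂, simCflat C₁ C₂ = 1 ↔ C₁ = C₂)
    (hrefl : ∀ C, simC C C = 1)
    (Φ : Finset K) (hΦ : Φ.Nonempty) :
    simSbm simCflat simC wg Φ Φ hΦ hΦ = 1 := by
  have hsup : ∀ C ∈ Φ, Φ.sup' hΦ (fun D => simCflat C D) = 1 := by
    intro C hC
    apply le_antisymm
    · exact Finset.sup'_le _ _ (fun D _ => hflat_le C D)
    · rw [← (hflat_one C C).2 rfl]
      exact Finset.le_sup' (fun D => simCflat C D) hC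
  have hmem : ∀ p ∈ bm simCflat Φ Φ hΦ hΦ, p.1 = p.2 := by
    intro p hp
    simp only [bm, Finset.union_idempotent, Finset.mem_filter, Finset.mem_product] at hp
    obtain ⟨⟨h1, _⟩, h⟩ := hp
    rw [hsup _ h1] at h
    exact (hflat_one _ _).1 h
  have hne : (bm simCflat Φ Φ hΦ hΦ).Nonempty := by
    obtain ⟨C, hC⟩ := hΦ
    refine ⟨(C, C), ?_⟩
    simp only [bm, Finset.union_idempotent, Finset.mem_filter, Finset.mem_product]
    exact ⟨⟨hC, hC⟩, by rw [hsup C hC]; exact (hflat_one C C).2 rfl⟩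
  have hpos : 0 < ∑ p ∈ bm simCflat Φ Φ hΦ hΦ, wg p :=
    Finset.sum_pos (fun p _ => hwg p) hne
  have hnum : ∑ p ∈ bm simCflat Φ Φ hΦ hΦ, wg p * simC p.1 p.2
      = ∑ p ∈ bm simCflat Φ Φ hΦ hΦ, wg p := by
    refine Finset.sum_congr rfl (fun p hp => ?_)
    rw [hmem p hp, hrefl, mul_one]
  unfold simSbm
  rw [hnum]
  exact div_self hpos.ne'
end

section
/- Let K be a type, simC_flat, simC : K → K → ℝ, and w_g : K × K → ℝ with w_g(C₁,C₂) > 0 for all pairs. Assume simC(C₁,C₂) ≤ 1 for all C₁,C₂ and that simC(C₁,C₂) = 1 implies C₁ = C₂. Then for all nonempty finite sets Φ, Ψ ⊆ K, if the best-match set similarity satisfies simS^bm(Φ,Ψ) = 1, then Φ = Ψ. -/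
open Classical Finset

/-- if the best-match set similarity of two nonempty finite sets equals 1,
the sets are equal. -/
theorem simSbm_eq_one_implies_eq {K : Type*} (simCflat simC : K → K → ℝ)
    (wg : K × K → ℝ) (hwg : ∀ p, 0 < wg p)
    (hle : ∀ C₁ C₂, simC C₁ C₂ ≤ 1)
    (hone : ∀ C₁ C₂, simC C₁ C₂ = 1 → C₁ = C₂)
    (Φ Ψ : Finset K) (hΦ : Φ.Nonempty) (hΨ : Ψ.Nonempty)
    (h : simSbm simCflat simC wg Φ Ψ hΦ hΨ = 1) :
    Φ = Ψ := by
  have key : ∀ p ∈ bm simCflat Φ Ψ hΦ hΨ, p.1 = p.2 := by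
    unfold simSbm at h
    have hne : (∑ p ∈ bm simCflat Φ Ψ hΦ hΨ, wg p) ≠ 0 := by
      intro h0
      rw [h0, div_zero] at h
      exact zero_ne_one h
    rw [div_eq_one_iff_eq hne] at h
    have h2 := (Finset.sum_eq_sum_iff_of_le (fun p _ =>
      mul_le_of_le_one_right (hwg p).le (hle p.1 p.2))).1 h
    intro p hp
    apply hone
    have h3 := h2 p hp
    exact (mul_eq_left₀ (hwg p).ne').1 h3
  apply Finset.Subset.antisymm
  · intro x hx
    obtain ⟨y, hy, hxy⟩ := Finset.exists_mem_eq_sup' hΨ (fun C => simCflat x C)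
    have : x = y := key (x, y) (by
      unfold bm
      exact Finset.mem_union_left _ (Finset.mem_filter.2 ⟨Finset.mk_mem_product hx hy, hxy.symm⟩))
    exact this ▸ hy
  · intro x hx
    obtain ⟨y, hy, hxy⟩ := Finset.exists_mem_eq_sup' hΦ (fun C => simCflat x C)
    have : x = y := key (x, y) (by
      unfold bm
      exact Finset.mem_union_right _ (Finset.mem_filter.2 ⟨Finset.mk_mem_product hx hy, hxy.symm⟩))
    exact this ▸ hy
end

section
/- (Substitution, Theorem 3) Let simS be a real-valued function on pairs of nonempty finite sets of clauses with 0 ≤ simS(Φ₁,Φ₂) ≤ 1 for all Φ₁,Φ₂, and assume that simS(Φ₁,Φ₂) = 1 implies simS(Φ₁,Φ₃) = simS(Φ₂,Φ₃) for all Φ₃. Then for every η ∈ (0,1) and all compiled arguments A, B, C: if simArg_η(A,B) = 1 then simArg_η(A,C) = simArg_η(B,C). -/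
open Classical Finset

/-- A literal: a predicate symbol together with a nonempty finite vector of term
symbols (of length `n + 1`). -/
abbrev Lit (τ : Type*) := τ × Σ n : ℕ, Fin (n + 1) → τ

/-- A clause: a nonempty finite set of literals. -/
abbrev Clause (τ : Type*) := {C : Finset (Lit τ) // C.Nonempty}

/-- A nonempty finite set of clauses. -/
abbrev ClauseSet (τ : Type*) := {Φ : Finset (Clause τ) // Φ.Nonempty}

/-- A compiled argument: a support and a claim, each a nonempty finite set of
clauses. -/
structure CArg (τ : Type*) where
  supp : ClauseSet τ
  claim : ClauseSet τ

/-- Argument similarity: weighted combination of support and claim similarities. -/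
noncomputable def simArg {τ : Type*} (simS : ClauseSet τ → ClauseSet τ → ℝ)
    (η : ℝ) (A B : CArg τ) : ℝ :=
  η * simS A.supp B.supp + (1 - η) * simS A.claim B.claim

/-- Substitution, Theorem 3. -/
theorem substitution {τ : Type*} (simS : ClauseSet τ → ClauseSet τ → ℝ)
    (hbound : ∀ Φ₁ Φ₂, 0 ≤ simS Φ₁ Φ₂ ∧ simS Φ₁ Φ₂ ≤ 1)
    (hsub : ∀ Φ₁ Φ₂, simS Φ₁ Φ₂ = 1 → ∀ Φ₃, simS Φ₁ Φ₃ = simS Φ₂ Φ₃)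
    (η : ℝ) (hη : 0 < η ∧ η < 1) (A B C : CArg τ)
    (hAB : simArg simS η A B = 1) :
    simArg simS η A C = simArg simS η B C := by
  obtain ⟨h0, h1⟩ := hη
  have hs := (hbound A.supp B.supp).2
  have hc := (hbound A.claim B.claim).2
  unfold simArg at hAB ⊢
  have e1 : simS A.supp B.supp = 1 := by
    by_contra hne
    have hlt := lt_of_le_of_ne hs hne
    have p1 := mul_pos h0 (sub_pos.2 hlt)
    have p2 := mul_nonneg (sub_pos.2 h1).le (sub_nonneg.2 hc)
    linarith
  have e2 : simS A.claim B.claim = 1 := by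
    by_contra hne
    have hlt := lt_of_le_of_ne hc hne
    have p1 := mul_nonneg h0.le (sub_nonneg.2 hs)
    have p2 := mul_pos (sub_pos.2 h1) (sub_pos.2 hlt)
    linarith
  rw [hsub _ _ e1 C.supp, hsub _ _ e2 C.claim]
end

section
/- Let τ be a type, simP : τ → τ → ℝ with simP(s,t) ≥ 0 for all s,t, λ ∈ (0,1), and w_p : τ → ℝ with w_p(t) > 0 for all t. Let (P, a⃗) and (Q, b⃗) be literals with a⃗, b⃗ nonempty, and suppose either simP(P,Q) > 0, or there exists a position i ≤ min(|a⃗|,|b⃗|) with simP(a_i,b_i) > 0. Then the weighted literal similarity satisfies simL^{weight,λ}((P,a⃗),(Q,b⃗)) > 0. -/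
open Classical Finset

/-- if the predicate similarity is positive on the predicates, or at some
common position, then the weighted literal similarity is positive. -/
theorem weighted_literal_pos {τ : Type*} (simP : τ → τ → ℝ)
    (hnn : ∀ s t, 0 ≤ simP s t)
    (lam : ℝ) (hlam : 0 < lam ∧ lam < 1)
    (wp : τ → ℝ) (hwp : ∀ t, 0 < wp t)
    (beta : τ → (k : ℕ) → (Fin k → τ) → τ)
    (hbeta : ∀ (x : τ) (k : ℕ) (hk : 0 < k) (y : Fin k → τ),
      (∃ j : Fin k, beta x k y = y j) ∧
      simP x (beta x k y) = fmax hk (fun j => simP x (y j)))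
    {m n : ℕ} (hm : 0 < m) (hn : 0 < n)
    (P Q : τ) (a : Fin m → τ) (b : Fin n → τ)
    (hpos : 0 < simP P Q ∨
      ∃ (i : ℕ) (him : i < m) (hin : i < n), 0 < simP (a ⟨i, him⟩) (b ⟨i, hin⟩)) :
    0 < simLweight simP wp beta lam hm hn P Q a b := by
  obtain ⟨hl0, hl1⟩ := hlam
  have hl1' : 0 < 1 - lam := by linarith
  have hW : 0 < lam * wOrd wp a b + (1 - lam) * wUnord wp beta a b := by
    have h1 : 0 ≤ wOrd wp a b :=
      Finset.sum_nonneg fun i _ => (mul_pos (hwp _) (hwp _)).le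
    have h2 : 0 < wUnord wp beta a b := by
      apply add_pos_of_pos_of_nonneg
      · exact Finset.sum_pos (fun i _ => mul_pos (hwp _) (hwp _))
          ⟨⟨0, hm⟩, Finset.mem_univ _⟩
      · exact Finset.sum_nonneg fun i _ => (mul_pos (hwp _) (hwp _)).le
    have h3 := mul_nonneg hl0.le h1
    have h4 := mul_pos hl1' h2
    linarith
  have hPQ : 0 < wp P * wp Q := mul_pos (hwp P) (hwp Q)
  have hU : 0 ≤ simUnord simP hm hn a b := by
    apply div_nonneg
    · apply add_nonneg
      · refine Finset.sum_nonneg fun i _ => ?_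
        rw [← (hbeta (a i) n hn b).2]
        exact hnn _ _
      · refine Finset.sum_nonneg fun j _ => ?_
        rw [← (hbeta (b j) m hm a).2]
        exact hnn _ _
    · positivity
  have hO : 0 ≤ simOrd simP a b :=
    div_nonneg (Finset.sum_nonneg fun i _ => hnn _ _) (Nat.cast_nonneg _)
  have hUm := mul_nonneg hl1'.le hU
  unfold simLweight
  apply div_pos _ (by linarith)
  rcases hpos with h | ⟨i, him, hin, h⟩
  · have hp : 0 ≤ simPara simP lam hm hn a b :=
      add_nonneg (mul_nonneg hl0.le hO) hUm
    exact add_pos_of_pos_of_nonneg (mul_pos hPQ h) (mul_nonneg hp hW.le)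
  · have hO' : 0 < simOrd simP a b := by
      apply div_pos
      · exact Finset.sum_pos' (fun i _ => hnn _ _)
          ⟨⟨i, lt_min him hin⟩, Finset.mem_univ _, h⟩
      · exact Nat.cast_pos.mpr (lt_min hm hn)
    have hp : 0 < simPara simP lam hm hn a b :=
      add_pos_of_pos_of_nonneg (mul_pos hl0 hO') hUm
    exact add_pos_of_nonneg_of_pos (mul_nonneg hPQ.le (hnn _ _)) (mul_pos hp hW)
end

section
/- Let τ be a type and ar : τ → ℕ an arity function with ar(P) ≥ 1 for all P, so that a literal is a dependent pair (P, a⃗) with a⃗ a vector of length ar(P) over τ. Let simP^eq : τ → τ → ℝ be defined by simP^eq(s,t) = 1 if s = t and 0 otherwise, let λ ∈ (0,1), and let w_p : τ → ℝ with w_p(t) > 0 for all t. Then the weighted literal similarity built from simP^eq satisfies, for all literals l₁, l₂: simL^{weight,λ}(l₁,l₂) = 1 if and only if l₁ = l₂. -/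
open Classical Finset

theorem fmax_le_one {n : ℕ} (hn : 0 < n) (f : Fin n → ℝ) (hf : ∀ i, f i ≤ 1) :
    fmax hn f ≤ 1 := Finset.sup'_le _ _ (fun i _ => hf i)

theorem fmax_eq_one {n : ℕ} (hn : 0 < n) (f : Fin n → ℝ) (hf : ∀ i, f i ≤ 1)
    (i : Fin n) (hi : f i = 1) : fmax hn f = 1 :=
  le_antisymm (fmax_le_one hn f hf) (hi ▸ Finset.le_sup' f (Finset.mem_univ i))

theorem sum_fin_le {n : ℕ} (f : Fin n → ℝ) (hf : ∀ i, f i ≤ 1) : ∑ i, f i ≤ (n : ℝ) := by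
  calc ∑ i, f i ≤ ∑ _i : Fin n, (1 : ℝ) := Finset.sum_le_sum (fun i _ => hf i)
    _ = n := by simp

theorem sum_fin_eq {n : ℕ} (f : Fin n → ℝ) (hf : ∀ i, f i ≤ 1) (h : ∑ i, f i = (n : ℝ)) :
    ∀ i, f i = 1 := by
  have h2 : ∑ i, f i = ∑ _i : Fin n, (1 : ℝ) := by simp [h]
  intro i
  exact (Finset.sum_eq_sum_iff_of_le (fun i _ => hf i)).1 h2 i (Finset.mem_univ i)

theorem simOrd_le {τ : Type*} (s : τ → τ → ℝ) (hs : ∀ x y, s x y ≤ 1) {m n : ℕ}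
    (a : Fin m → τ) (b : Fin n → τ) : simOrd s a b ≤ 1 :=
  div_le_one_of_le₀ (sum_fin_le _ (fun _ => hs _ _)) (Nat.cast_nonneg _)

theorem simUnord_le {τ : Type*} (s : τ → τ → ℝ) (hs : ∀ x y, s x y ≤ 1) {m n : ℕ}
    (hm : 0 < m) (hn : 0 < n) (a : Fin m → τ) (b : Fin n → τ) : simUnord s hm hn a b ≤ 1 :=
  div_le_one_of_le₀ (add_le_add
    (sum_fin_le _ (fun _ => fmax_le_one _ _ (fun _ => hs _ _)))
    (sum_fin_le _ (fun _ => fmax_le_one _ _ (fun _ => hs _ _)))) (by positivity)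

theorem simOrd_self {τ : Type*} (s : τ → τ → ℝ) (hs : ∀ x, s x x = 1) {m : ℕ}
    (hm : 0 < m) (a : Fin m → τ) : simOrd s a a = 1 := by
  have : (m : ℝ) ≠ 0 := by positivity
  simp [simOrd, hs, this]

theorem simUnord_self {τ : Type*} (s : τ → τ → ℝ) (hs : ∀ x y, s x y ≤ 1)
    (hs1 : ∀ x, s x x = 1) {m : ℕ}
    (hm : 0 < m) (a : Fin m → τ) : simUnord s hm hm a a = 1 := by
  have h0 : (m : ℝ) + m ≠ 0 := by positivity
  have h1 : ∀ i, fmax hm (fun j => s (a i) (a j)) = 1 := fun i =>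
    fmax_eq_one _ _ (fun _ => hs _ _) i (hs1 _)
  simp [simUnord, h1, h0]

theorem simOrd_eq {τ : Type*} (s : τ → τ → ℝ) (hs : ∀ x y, s x y ≤ 1)
    (hs1 : ∀ x y, s x y = 1 → x = y) {m : ℕ}
    (hm : 0 < m) (a b : Fin m → τ) (h : simOrd s a b = 1) : a = b := by
  have h0 : ((min m m : ℕ) : ℝ) ≠ 0 := by simp; omega
  unfold simOrd at h
  rw [div_eq_one_iff_eq h0] at h
  have := sum_fin_eq _ (fun _ => hs _ _) h
  funext i
  exact hs1 _ _ (this ⟨i.1, by simp⟩)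

/-- for the crisp predicate similarity `simP^eq` (1 on equal symbols,
0 otherwise), the weighted literal similarity of two dependent literals equals 1 iff
the literals are equal. -/
theorem weighted_literal_eq_one_iff {τ : Type*} (ar : τ → ℕ) (har : ∀ P, 1 ≤ ar P)
    (simPeq : τ → τ → ℝ) (hPeq : ∀ s t, simPeq s t = if s = t then 1 else 0)
    (lam : ℝ) (hlam : 0 < lam ∧ lam < 1)
    (wp : τ → ℝ) (hwp : ∀ t, 0 < wp t)
    (beta : τ → (k : ℕ) → (Fin k → τ) → τ)
    (hbeta : ∀ (x : τ) (k : ℕ) (hk : 0 < k) (y : Fin k → τ),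
      (∃ j : Fin k, beta x k y = y j) ∧
      simPeq x (beta x k y) = fmax hk (fun j => simPeq x (y j)))
    (l₁ l₂ : (P : τ) × (Fin (ar P) → τ)) :
    simLweight simPeq wp beta lam (har l₁.1) (har l₂.1) l₁.1 l₂.1 l₁.2 l₂.2 = 1 ↔
      l₁ = l₂ := by
  obtain ⟨hl0, hl1⟩ := hlam
  have hs : ∀ x y, simPeq x y ≤ 1 := by
    intro x y; rw [hPeq]; split_ifs <;> norm_num
  have hs1 : ∀ x, simPeq x x = 1 := by intro x; simp [hPeq]
  have hs2 : ∀ x y, simPeq x y = 1 → x = y := by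
    intro x y h; rw [hPeq] at h; by_contra hne; simp [hne] at h
  obtain ⟨P, a⟩ := l₁
  obtain ⟨Q, b⟩ := l₂
  have hPQ : 0 < wp P * wp Q := mul_pos (hwp _) (hwp _)
  have hWo : 0 ≤ wOrd wp a b := Finset.sum_nonneg (fun _ _ => (mul_pos (hwp _) (hwp _)).le)
  have hWu : 0 < wUnord wp beta a b := by
    refine add_pos_of_pos_of_nonneg (Finset.sum_pos (fun _ _ => mul_pos (hwp _) (hwp _))
      ⟨⟨0, har P⟩, Finset.mem_univ _⟩)
      (Finset.sum_nonneg (fun _ _ => (mul_pos (hwp _) (hwp _)).le))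
  have hW : 0 < lam * wOrd wp a b + (1 - lam) * wUnord wp beta a b :=
    add_pos_of_nonneg_of_pos (mul_nonneg hl0.le hWo) (mul_pos (by linarith) hWu)
  have ho := simOrd_le simPeq hs a b
  have hu := simUnord_le simPeq hs (har P) (har Q) a b
  show simLweight simPeq wp beta lam (har P) (har Q) P Q a b = 1 ↔ _
  unfold simLweight
  rw [div_eq_one_iff_eq (by positivity)]
  generalize lam * wOrd wp a b + (1 - lam) * wUnord wp beta a b = W at hW
  constructor
  · intro h
    have hp : simPara simPeq lam (har P) (har Q) a b ≤ 1 := by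
      unfold simPara; nlinarith
    have e1 : simPeq P Q = 1 := by
      refine le_antisymm (hs P Q) ?_
      by_contra hc
      nlinarith [mul_pos hPQ (sub_pos.2 (not_le.1 hc)), mul_nonneg hW.le (sub_nonneg.2 hp)]
    have e2 : simPara simPeq lam (har P) (har Q) a b = 1 := by
      rw [e1] at h
      have : (simPara simPeq lam (har P) (har Q) a b - 1) * W = 0 := by linarith
      rcases mul_eq_zero.1 this with h | h <;> linarith
    have e3 : simOrd simPeq a b = 1 := by
      unfold simPara at e2
      refine le_antisymm ho ?_
      by_contra hc
      nlinarith [mul_pos hl0 (sub_pos.2 (not_le.1 hc)),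
        mul_nonneg (sub_pos.2 hl1).le (sub_nonneg.2 hu)]
    obtain rfl := hs2 _ _ e1
    rw [simOrd_eq simPeq hs hs2 (har P) a b e3]
  · intro h
    cases h
    unfold simPara
    rw [simOrd_self simPeq hs1 (har P), simUnord_self simPeq hs hs1 (har P), hs1]
    ring
end
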